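/- arXiv:1911.08924 — 5 statements merged into one kernel-verified Lean document; each statement's English description precedes it below -/
import Mathlib

section
/- For every n ≥ 1 and every balanced coloring c of the 2n collinear points, there exists a non-crossing bichromatic Hamiltonian path drawn on two pages. Precisely: there exist a bijection v : Fin (2n) → Fin (2n) (the order in which the path visits the points) such that c (v i) ≠ c (v (i+1)) for every i < 2n−1, and a page assignment σ : Fin (2n−1) → Bool of the path edges e_i = {v i, v (i+1)} to the halfplanes above/below the line, such that no two edges assigned to the same page interleave. -/
/-- Two edges, given as (unordered) pairs of natural-number indices, interleave
(cross when drawn as circular arcs on the same side of the line):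
with `a < b`, `c < d` the normalized endpoints, `a < c < b < d` or `c < a < d < b`. -/
def Interleaves (p q : ℕ × ℕ) : Prop :=
  (min p.1 p.2 < min q.1 q.2 ∧ min q.1 q.2 < max p.1 p.2 ∧ max p.1 p.2 < max q.1 q.2) ∨
  (min q.1 q.2 < min p.1 p.2 ∧ min p.1 p.2 < max q.1 q.2 ∧ max q.1 q.2 < max p.1 p.2)

/-!
Two disjoint arcs over a line cross exactly when their endpoints alternate around the circle, so
rotating the sequence of points changes nothing; by the cycle lemma the colors of some rotation form
a Dyck word. A nonempty Dyck word has the form `U p D q` with `p` and `q` Dyck words, and by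
induction on this decomposition there is a two-page path from the first to the last point.

* Concatenating two blocks adds an edge between consecutive points, which crosses nothing.
* In `U p D` with end points `a` and `b`, the path through `p` is traversed backwards: from `a` to
  the last point of `p`, through `p` to its first point, then to `b`. The two new edges cross each
  other, but on separate pages each of them merely encloses the edges of `p`.
-/

section Pages

variable {α : Type*} {w w₁ w₂ : List α} {G G₁ G₂ : SimpleGraph α}

/-- `IsPage w G`: the edges of `G` can be drawn as pairwise noncrossing arcs in a halfplane bounded
by a line that carries the points of the list `w`, in this order. The order of the points is
encoded by sublists of `w`, so that rotating the line into itself amounts to rotating `w`. -/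
structure IsPage (w : List α) (G : SimpleGraph α) : Prop where
  mem_of_adj : ∀ ⦃x y⦄, G.Adj x y → x ∈ w
  not_adj_of_adj : ∀ ⦃a x b y⦄, [a, x, b, y].Sublist w → G.Adj a b → ¬ G.Adj x y

theorem isPage_bot (w : List α) : IsPage w ⊥ := ⟨by simp, by simp⟩

namespace IsPage

theorem rotate (h : IsPage w G) (n : ℕ) : IsPage (w.rotate n) G := by
  induction n generalizing w with
  | zero => simpa using h
  | succ n ih =>
    cases w with
    | nil => simpa using h
    | cons p t =>
      rw [List.rotate_cons_succ]
      refine ih ⟨fun x y hxy => ?_, fun a x b y hs hab hxy => ?_⟩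
      · simpa [or_comm] using h.mem_of_adj hxy
      · obtain ⟨s₁, s₂, hs, hs₁, hs₂⟩ := List.sublist_append_iff.1 hs
        obtain rfl | rfl : s₂ = [] ∨ s₂ = [p] := by simpa using hs₂
        · rw [List.append_nil] at hs
          exact h.not_adj_of_adj ((hs ▸ hs₁).cons p) hab hxy
        · obtain ⟨rfl, rfl⟩ : [a, x, b] = s₁ ∧ y = p := by
            simpa using List.append_inj' (s₁ := [a, x, b]) (t₁ := [y]) hs rfl
          exact h.not_adj_of_adj (hs₁.cons_cons y) hxy.symm hab

theorem of_isRotated (h : IsPage w₁ G) (hw : w₁ ~r w₂) : IsPage w₂ G := by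
  obtain ⟨n, rfl⟩ := hw
  exact h.rotate n

theorem cons (h : IsPage w G) {p : α} (hp : p ∉ w) : IsPage (p :: w) G where
  mem_of_adj _ _ hxy := List.mem_cons_of_mem p (h.mem_of_adj hxy)
  not_adj_of_adj a x b y hs hab := by
    have hap : a ≠ p := by rintro rfl; exact hp (h.mem_of_adj hab)
    exact h.not_adj_of_adj (List.Sublist.of_cons_of_ne hap hs) hab

theorem append_left (h : IsPage w₂ G) (hw : (w₁ ++ w₂).Nodup) : IsPage (w₁ ++ w₂) G := by
  induction w₁ with
  | nil => exact h
  | cons p t ih =>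
    rw [List.cons_append, List.nodup_cons] at hw
    exact (ih hw.2).cons hw.1

theorem append_right (h : IsPage w₁ G) (hw : (w₁ ++ w₂).Nodup) : IsPage (w₁ ++ w₂) G :=
  (h.append_left (List.isRotated_append.nodup_iff.1 hw)).of_isRotated List.isRotated_append

theorem append (h₁ : IsPage w₁ G₁) (h₂ : IsPage w₂ G₂) (hw : (w₁ ++ w₂).Nodup) :
    IsPage (w₁ ++ w₂) (G₁ ⊔ G₂) := by
  have ordered : (w₁ ++ w₂).Pairwise fun p q => p ∈ w₂ → q ∉ w₁ := by
    have := List.disjoint_of_nodup_append hw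
    rw [List.pairwise_append]
    grind [List.pairwise_of_forall_mem_list, List.Disjoint]
  have h₁' := h₁.append_right hw
  have h₂' := h₂.append_left hw
  refine ⟨fun x y hxy => hxy.elim (h₁'.mem_of_adj ·) (h₂'.mem_of_adj ·), ?_⟩
  rintro a x b y hs (hab | hab) (hxy | hxy)
  · exact h₁'.not_adj_of_adj hs hab hxy
  · have hxb : [x, b].Sublist [a, x, b, y] := by simp
    exact ordered.forall_sublist (hxb.trans hs) (h₂.mem_of_adj hxy) (h₁.mem_of_adj hab.symm)
  · have hax : [a, x].Sublist [a, x, b, y] := by simp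
    exact ordered.forall_sublist (hax.trans hs) (h₂.mem_of_adj hab) (h₁.mem_of_adj hxy)
  · exact h₂'.not_adj_of_adj hs hab hxy

theorem sup_edge_ends {p q : α} {u : List α} (h : IsPage (p :: (u ++ [q])) G)
    (hw : (p :: (u ++ [q])).Nodup) : IsPage (p :: (u ++ [q])) (G ⊔ SimpleGraph.edge p q) := by
  refine ⟨fun x y hxy => ?_, fun a x b y hs => ?_⟩
  · obtain hxy | hxy := hxy
    · exact h.mem_of_adj hxy
    · simp only [SimpleGraph.edge_adj] at hxy
      grind
  · have inner : ∀ z ∈ p :: u, z ∈ u ++ [q] → z ≠ p ∧ z ≠ q := by grind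
    have hinit : [b, x, a].Sublist (p :: u).reverse := by simpa using hs.reverse.tail
    have htail : [x, b, y].Sublist (u ++ [q]) := hs.tail
    have hx := inner x (List.mem_reverse.1 (hinit.subset (by simp))) (htail.subset (by simp))
    have hb := inner b (List.mem_reverse.1 (hinit.subset (by simp))) (htail.subset (by simp))
    have hG := h.not_adj_of_adj hs
    simp only [SimpleGraph.sup_adj, SimpleGraph.edge_adj]
    tauto

theorem sup_edge_consecutive {p q : α} {u v : List α} (h : IsPage (u ++ [p] ++ q :: v) G)
    (hw : (u ++ [p] ++ q :: v).Nodup) :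
    IsPage (u ++ [p] ++ q :: v) (G ⊔ SimpleGraph.edge p q) := by
  have hrot : (u ++ [p] ++ q :: v) ~r (q :: (v ++ u ++ [p])) := by
    simpa using List.isRotated_append (l := u ++ [p]) (l' := q :: v)
  rw [SimpleGraph.edge_comm]
  exact ((h.of_isRotated hrot).sup_edge_ends (hrot.nodup_iff.1 hw)).of_isRotated hrot.symm

end IsPage

end Pages

section TwoPagePath

variable {α β : Type*} {c : α → β} {w w₁ w₂ l : List α} {G H : SimpleGraph α}

/-- `TwoPagePath c w l G H`: the list `l` is a Hamiltonian path through the points of `w` whose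
consecutive points have different colors and whose edges lie on the two pages `G` and `H`. -/
structure TwoPagePath (c : α → β) (w l : List α) (G H : SimpleGraph α) : Prop where
  perm : l.Perm w
  isPage_fst : IsPage w G
  isPage_snd : IsPage w H
  isChain : l.IsChain fun x y => c x ≠ c y ∧ (G.Adj x y ∨ H.Adj x y)

namespace TwoPagePath

theorem of_isRotated (h : TwoPagePath c w₁ l G H) (hw : w₁ ~r w₂) : TwoPagePath c w₂ l G H where
  perm := h.perm.trans hw.perm
  isPage_fst := h.isPage_fst.of_isRotated hw
  isPage_snd := h.isPage_snd.of_isRotated hw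
  isChain := h.isChain

theorem of_comp {γ : Type*} {f : β → γ} (h : TwoPagePath (f ∘ c) w l G H) :
    TwoPagePath c w l G H where
  perm := h.perm
  isPage_fst := h.isPage_fst
  isPage_snd := h.isPage_snd
  isChain := h.isChain.imp fun _ _ => And.imp_left (mt (congrArg f))

theorem pair {a b : α} (hc : c a ≠ c b) :
    TwoPagePath c [a, b] [a, b] (SimpleGraph.edge a b) ⊥ where
  perm := .rfl
  isPage_fst := by
    have hab : a ≠ b := ne_of_apply_ne c hc
    simpa using (isPage_bot [a, b]).sup_edge_ends (u := []) (by simpa using hab)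
  isPage_snd := isPage_bot _
  isChain := by simpa [SimpleGraph.edge_adj, hc] using ne_of_apply_ne c hc

theorem append {u v m k : List α} {p q : α} {G' H' : SimpleGraph α}
    (h₁ : TwoPagePath c (u ++ [p]) (m ++ [p]) G H) (h₂ : TwoPagePath c (q :: v) (q :: k) G' H')
    (hw : (u ++ [p] ++ q :: v).Nodup) (hc : c p ≠ c q) :
    TwoPagePath c (u ++ [p] ++ q :: v) (m ++ [p] ++ q :: k)
      (G ⊔ G' ⊔ SimpleGraph.edge p q) (H ⊔ H') where
  perm := h₁.perm.append h₂.perm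
  isPage_fst := (h₁.isPage_fst.append h₂.isPage_fst hw).sup_edge_consecutive hw
  isPage_snd := h₁.isPage_snd.append h₂.isPage_snd hw
  isChain := by
    have hpq : p ≠ q := ne_of_apply_ne c hc
    refine List.isChain_append.2 ⟨h₁.isChain.imp ?_, h₂.isChain.imp ?_, ?_⟩
    · grind
    · grind
    · simp [SimpleGraph.edge_adj, hc, hpq]

theorem nest {a b p q : α} {u m : List α}
    (h : TwoPagePath c (p :: (u ++ [q])) (p :: (m ++ [q])) G H)
    (hw : (a :: (p :: (u ++ [q]) ++ [b])).Nodup) (ha : c a ≠ c q) (hb : c p ≠ c b) :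
    TwoPagePath c (a :: (p :: (u ++ [q]) ++ [b])) (a :: ((p :: (m ++ [q])).reverse ++ [b]))
      (G ⊔ SimpleGraph.edge a q) (H ⊔ SimpleGraph.edge p b) where
  perm := ((List.reverse_perm _).trans h.perm |>.append_right [b]).cons a
  isPage_fst := by
    have haw : (a :: (p :: u ++ [q])).Nodup := hw.sublist (by simp)
    exact ((h.isPage_fst.cons (List.nodup_cons.1 haw).1).sup_edge_ends haw).append_right hw
  isPage_snd := by
    have hwb : (p :: ((u ++ [q]) ++ [b])).Nodup := hw.of_cons
    exact ((h.isPage_snd.append_right hwb).sup_edge_ends hwb).cons (List.nodup_cons.1 hw).1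
  isChain := by
    have haq : a ≠ q := ne_of_apply_ne c ha
    have hpb : p ≠ b := ne_of_apply_ne c hb
    have hrev : (p :: (m ++ [q])).reverse.IsChain fun x y =>
        c x ≠ c y ∧ ((G ⊔ SimpleGraph.edge a q).Adj x y ∨ (H ⊔ SimpleGraph.edge p b).Adj x y) :=
      List.isChain_reverse.2 <| h.isChain.imp fun x y hxy =>
        ⟨hxy.1.symm, hxy.2.imp (fun hG => .inl hG.symm) (fun hH => .inl hH.symm)⟩
    rw [List.isChain_cons, List.isChain_append]
    refine ⟨by simp [SimpleGraph.edge_adj, ha, haq], hrev, by simp, ?_⟩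
    · rw [List.getLast?_reverse]
      simp [SimpleGraph.edge_adj, hb, hpb]

end TwoPagePath

end TwoPagePath

section Dyck

open DyckStep

variable {α : Type*} {s : α → DyckStep} {w w₁ w₂ : List α}

theorem dyckWord_induction {P : DyckWord → Prop} (zero : P 0)
    (nest_add : ∀ p q, P p → P q → P (p.nest + q)) (p : DyckWord) : P p := by
  obtain ⟨t, rfl⟩ := DyckWord.equivTree.symm.surjective p
  induction t with
  | nil => exact zero
  | node _ t₁ t₂ ih₁ ih₂ => exact nest_add _ _ ih₁ ih₂

/-- A block of points colored by up and down steps, beginning with an up step and ending with a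
down step, that has a two-page path from its first to its last point. -/
def IsTraversable (s : α → DyckStep) (w : List α) : Prop :=
  ∃ a u m b G H, w = a :: (u ++ [b]) ∧ s a = U ∧ s b = D ∧
    TwoPagePath s w (a :: (m ++ [b])) G H

theorem isTraversable_pair {a b : α} (ha : s a = U) (hb : s b = D) : IsTraversable s [a, b] :=
  ⟨a, [], [], b, _, _, rfl, ha, hb, TwoPagePath.pair (by simp [ha, hb])⟩

namespace IsTraversable

theorem append (h₁ : IsTraversable s w₁) (h₂ : IsTraversable s w₂) (hw : (w₁ ++ w₂).Nodup) :
    IsTraversable s (w₁ ++ w₂) := by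
  obtain ⟨a, u, m, b, G, H, rfl, ha, hb, hpath⟩ := h₁
  obtain ⟨a', u', m', b', G', H', rfl, ha', hb', hpath'⟩ := h₂
  have := TwoPagePath.append (u := a :: u) (m := a :: m) hpath hpath' hw (by simp [hb, ha'])
  exact ⟨a, u ++ b :: a' :: u', m ++ b :: a' :: m', b', _, _, by simp, ha, hb', by simpa using this⟩

theorem nest (h : IsTraversable s w) {a b : α} (ha : s a = U) (hb : s b = D)
    (hw : (a :: (w ++ [b])).Nodup) : IsTraversable s (a :: (w ++ [b])) := by
  obtain ⟨p, u, m, q, G, H, rfl, hp, hq, hpath⟩ := h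
  exact ⟨a, p :: (u ++ [q]), (p :: (m ++ [q])).reverse, b, _, _, rfl, ha, hb,
    hpath.nest hw (by simp [ha, hq]) (by simp [hp, hb])⟩

theorem of_map_eq_dyckWord (p : DyckWord) (hw : w.Nodup) (hp : w.map s = p.toList)
    (hne : w ≠ []) : IsTraversable s w := by
  induction p using dyckWord_induction generalizing w with
  | zero => exact absurd (List.map_eq_nil_iff.1 hp) hne
  | nest_add p q ihp ihq =>
    have hp : w.map s = U :: (p.toList ++ [D]) ++ q.toList := hp
    obtain ⟨w₁, v, rfl, hw₁, hv⟩ := List.map_eq_append_iff.1 hp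
    obtain ⟨a, t, rfl, ha, ht⟩ := List.map_eq_cons_iff.1 hw₁
    obtain ⟨u, b', rfl, hu, hb'⟩ := List.map_eq_append_iff.1 ht
    obtain ⟨b, rfl, hb⟩ := List.map_eq_singleton_iff.1 hb'
    have hnested : IsTraversable s (a :: (u ++ [b])) := by
      obtain rfl | hune := eq_or_ne u []
      · exact isTraversable_pair ha hb
      · exact (ihp (hw.sublist (by simp)) hu hune).nest ha hb hw.of_append_left
    obtain rfl | hvne := eq_or_ne v []
    · simpa using hnested
    · exact hnested.append (ihq hw.of_append_right hv hvne) hw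

end IsTraversable

/-- The height of the lattice path that makes the given up and down steps. -/
def height (l : List DyckStep) : ℤ := l.count U - l.count D

theorem height_append (l₁ l₂ : List DyckStep) : height (l₁ ++ l₂) = height l₁ + height l₂ := by
  simp only [height, List.count_append]
  push_cast
  ring

-- The rotation starts at a lowest point of the lattice path.
theorem exists_rotate_eq_dyckWord {l : List DyckStep} (hl : l.count U = l.count D) :
    ∃ (k : ℕ) (p : DyckWord), l.rotate k = p.toList := by
  obtain ⟨k, hk, hmin⟩ := Finset.exists_min_image (Finset.range (l.length + 1))
    (fun i => height (l.take i)) (by simp)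
  have hmin' (i : ℕ) : height (l.take k) ≤ height (l.take i) := by
    obtain hi | hi := le_total i l.length
    · exact hmin i (by simpa [Nat.lt_succ_iff] using hi)
    · simpa [List.take_of_length_le hi] using hmin l.length (by simp)
  have hrot : l.rotate k = l.drop k ++ l.take k :=
    List.rotate_eq_drop_append_take (by simpa [Nat.lt_succ_iff] using hk)
  have htotal : height (l.take k) + height (l.drop k) = 0 := by
    rw [← height_append, List.take_append_drop, height, hl, sub_self]
  have hprefix (i : ℕ) : 0 ≤ height ((l.rotate k).take i) := by
    rw [hrot, List.take_append]
    obtain hi | hi := le_total i (l.drop k).length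
    · have hki := hmin' (k + i)
      rw [List.take_add, height_append] at hki
      rw [Nat.sub_eq_zero_of_le hi, List.take_zero, height_append _ []]
      linarith [show height [] = 0 from rfl]
    · have := hmin' (min (i - (l.drop k).length) k)
      rw [List.take_of_length_le hi, List.take_take, height_append]
      linarith
  refine ⟨k, ⟨l.rotate k, ?_, fun i => ?_⟩, rfl⟩
  · simpa only [(List.rotate_perm l k).count_eq] using hl
  · simpa [height] using hprefix i

theorem exists_twoPagePath (hw : w.Nodup) (hs : (w.map s).count U = (w.map s).count D) :
    ∃ l G H, TwoPagePath s w l G H := by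
  obtain rfl | hne := eq_or_ne w []
  · exact ⟨[], ⊥, ⊥, .rfl, isPage_bot _, isPage_bot _, .nil⟩
  · obtain ⟨k, p, hp⟩ := exists_rotate_eq_dyckWord hs
    rw [← List.map_rotate] at hp
    obtain ⟨a, u, m, b, G, H, -, -, -, hpath⟩ := IsTraversable.of_map_eq_dyckWord p
      (List.nodup_rotate.2 hw) hp (by simpa using hne)
    exact ⟨_, G, H, hpath.of_isRotated (.forall w k)⟩

end Dyck

theorem IsPage.not_interleaves {N : ℕ} {G : SimpleGraph (Fin N)} (h : IsPage (List.finRange N) G)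
    {a b x y : Fin N} (hab : G.Adj a b) (hxy : G.Adj x y) :
    ¬ Interleaves ((a : ℕ), (b : ℕ)) ((x : ℕ), (y : ℕ)) := by
  have noncrossing {a b x y : Fin N} (hax : a < x) (hxb : x < b) (hby : b < y) (hab : G.Adj a b) :
      ¬ G.Adj x y := by
    refine h.not_adj_of_adj (List.sublist_of_subperm_of_pairwise (r := (· < ·)) ?_ ?_ ?_) hab
    · exact List.subperm_of_subset (by grind) (by simp)
    · grind
    · exact List.pairwise_lt_finRange N
  wlog hab' : a < b generalizing a b
  · simpa only [Interleaves, min_comm, max_comm] using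
      this hab.symm (lt_of_le_of_ne (not_lt.1 hab') hab.ne')
  wlog hxy' : x < y generalizing x y
  · simpa only [Interleaves, min_comm, max_comm] using
      this hxy.symm (lt_of_le_of_ne (not_lt.1 hxy') hxy.ne')
  rintro (⟨hax, hxb, hby⟩ | ⟨hxa, hay, hyb⟩)
  · exact noncrossing (by omega) (by omega) (by omega) hab hxy
  · exact noncrossing (by omega) (by omega) (by omega) hxy hab

theorem count_map_finRange {β : Type*} [DecidableEq β] {N : ℕ} (f : Fin N → β) (b : β) :
    ((List.finRange N).map f).count b = (Finset.univ.filter (f · = b)).card := by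
  rw [List.count, List.countP_map, List.countP_eq_length_filter]
  rfl

theorem exists_twoPagePath_of_balanced {n : ℕ} {c : Fin (2 * n) → Bool}
    (hbal : (Finset.univ.filter (c · = true)).card = n) :
    ∃ l G H, TwoPagePath c (List.finRange (2 * n)) l G H := by
  let s : Fin (2 * n) → DyckStep := (fun red : Bool => if red then .U else .D) ∘ c
  have hU : Finset.univ.filter (s · = .U) = Finset.univ.filter (c · = true) := by ext; simp [s]
  have hD : Finset.univ.filter (s · = .D) = Finset.univ.filter (¬ c · = true) := by ext; simp [s]
  have hcard := Finset.card_filter_add_card_filter_not (s := .univ) (c · = true)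
  rw [hbal, Finset.card_univ, Fintype.card_fin] at hcard
  obtain ⟨l, G, H, h⟩ := exists_twoPagePath (s := s) (List.nodup_finRange (2 * n)) <| by
    rw [count_map_finRange, count_map_finRange, hU, hD]
    omega
  exact ⟨l, G, H, h.of_comp⟩

/-- For every balanced 2-coloring of `2n` collinear points there is a non-crossing
bichromatic Hamiltonian path drawn on two pages. -/
theorem noncrossing_bichromatic_hamiltonian_path_exists
    (n : ℕ) (hn : 1 ≤ n) (c : Fin (2 * n) → Bool)
    (hbal : (Finset.univ.filter (fun i => c i = true)).card = n) :
    ∃ v : Fin (2 * n) → Fin (2 * n), Function.Bijective v ∧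
      (∀ i : Fin (2 * n - 1),
        c (v ⟨i.val, by have := i.isLt; omega⟩) ≠
        c (v ⟨i.val + 1, by have := i.isLt; omega⟩)) ∧
      ∃ σ : Fin (2 * n - 1) → Bool,
        ∀ i j : Fin (2 * n - 1), σ i = σ j →
          ¬ Interleaves
              (((v ⟨i.val, by have := i.isLt; omega⟩) : ℕ),
               ((v ⟨i.val + 1, by have := i.isLt; omega⟩) : ℕ))
              (((v ⟨j.val, by have := j.isLt; omega⟩) : ℕ),
               ((v ⟨j.val + 1, by have := j.isLt; omega⟩) : ℕ)) := by
  classical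
  obtain ⟨l, G, H, h⟩ := exists_twoPagePath_of_balanced hbal
  have hlen : l.length = 2 * n := by simpa using h.perm.length_eq
  have hnodup : l.Nodup := h.perm.nodup_iff.2 (List.nodup_finRange (2 * n))
  have hstep := List.isChain_iff_getElem.1 h.isChain
  refine ⟨fun i => l[i], ?_, fun i => (hstep i (by omega)).1,
    fun i => decide (G.Adj l[i.val] l[i.val + 1]), ?_⟩
  · exact Finite.injective_iff_bijective.1 fun i j hij =>
      Fin.ext (hnodup.getElem_inj_iff.1 hij)
  · intro i j hij
    by_cases hG : G.Adj l[i.val] l[i.val + 1]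
    · exact h.isPage_fst.not_interleaves hG (by simpa [hG] using hij)
    · exact h.isPage_snd.not_interleaves ((hstep i (by omega)).2.resolve_left hG)
        ((hstep j (by omega)).2.resolve_left (by simpa [hG] using hij))
end

section
/- For every n ≥ 1 and every balanced coloring c of the 2n collinear points, there exists a non-crossing perfect bichromatic matching: a partition M of Fin (2n) into n pairs such that every pair of M contains one red and one blue point and no two pairs of M interleave (any two pairs are nested or disjoint). -/
open Finset

variable {α κ : Type*}

/-- Two sets of points on a line cross when, from left to right, a point of `e`, a point of `f`,
a point of `e` and a point of `f` occur. The relation is not symmetric: a partition is noncrossing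
in the usual sense when no block crosses another one, in either order. -/
def Crosses [LinearOrder α] (e f : Finset α) : Prop :=
  ∃ x ∈ e, ∃ y ∈ f, ∃ x' ∈ e, ∃ y' ∈ f, x < y ∧ y < x' ∧ x' < y'

theorem not_crosses_pair_left [LinearOrder α] {s e : Finset α} {a b : s} (hab : a ⋖ b)
    (he : e ⊆ s) : ¬ Crosses {(a : α), (b : α)} e := by
  rintro ⟨x, hx, y, hy, x', hx', -, -, hxy, hyx', -⟩
  have hgap : ¬ (a < y ∧ y < b) := fun h => hab.2 (c := ⟨y, he hy⟩) h.1 h.2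
  have hlt : (a : α) < b := hab.1
  grind

theorem not_crosses_pair_right [LinearOrder α] {s e : Finset α} {a b : s} (hab : a ⋖ b)
    (he : e ⊆ s) : ¬ Crosses e {(a : α), (b : α)} := by
  rintro ⟨-, -, y, hy, x', hx', y', hy', -, hyx', hxy'⟩
  have hgap : ¬ (a < x' ∧ x' < b) := fun h => hab.2 (c := ⟨x', he hx'⟩) h.1 h.2
  have hlt : (a : α) < b := hab.1
  grind

theorem crosses_of_interleaves [LinearOrder α] {f : α → ℕ} (hf : StrictMono f) {a b a' b' : α}
    (h : Interleaves (f a, f b) (f a', f b')) :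
    Crosses {a, b} {a', b'} ∨ Crosses {a', b'} {a, b} := by
  have min_mem (x y : α) : min x y ∈ ({x, y} : Finset α) := by grind
  have max_mem (x y : α) : max x y ∈ ({x, y} : Finset α) := by grind
  simp only [Interleaves, ← hf.monotone.map_min, ← hf.monotone.map_max, hf.lt_iff_lt] at h
  exact h.imp
    (fun h => ⟨_, min_mem a b, _, min_mem a' b', _, max_mem a b, _, max_mem a' b', h⟩)
    (fun h => ⟨_, min_mem a' b', _, min_mem a b, _, max_mem a' b', _, max_mem a b, h⟩)

/-- A noncrossing perfect bichromatic matching of the points `s` colored by `c`: a partition of `s`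
into pairs of points of different colors such that no two pairs cross. -/
structure IsNoncrossingBichromaticMatching [LinearOrder α] (c : α → κ) {s : Finset α}
    (P : Finpartition s) : Prop where
  card_eq_two : ∀ e ∈ P.parts, #e = 2
  injOn : ∀ e ∈ P.parts, Set.InjOn c e
  not_crosses : ∀ e ∈ P.parts, ∀ f ∈ P.parts, ¬ Crosses e f

namespace IsNoncrossingBichromaticMatching

variable [LinearOrder α] {c : α → κ} {s : Finset α}

theorem card_parts {P : Finpartition s} (hP : IsNoncrossingBichromaticMatching c P) {n : ℕ}
    (hs : #s = 2 * n) : #P.parts = n := by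
  have hsum : #P.parts * 2 = #s := by rw [← P.sum_card_parts, sum_const_nat hP.card_eq_two]
  omega

theorem apply_ne_of_eq_pair {P : Finpartition s} (hP : IsNoncrossingBichromaticMatching c P)
    {e : Finset α} (he : e ∈ P.parts) {a b : α} (heq : e = {a, b}) (hab : a ≠ b) : c a ≠ c b :=
  (hP.injOn e he).ne (by simp [heq]) (by simp [heq]) hab

theorem not_interleaves {P : Finpartition s} (hP : IsNoncrossingBichromaticMatching c P)
    {f : α → ℕ} (hf : StrictMono f) {a b a' b' : α} (h : {a, b} ∈ P.parts)
    (h' : {a', b'} ∈ P.parts) : ¬ Interleaves (f a, f b) (f a', f b') := fun hI =>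
  (crosses_of_interleaves hf hI).elim (hP.not_crosses _ h _ h') (hP.not_crosses _ h' _ h)

theorem exists_of_covBy {a b : s} (hab : a ⋖ b) (hc : c a ≠ c b)
    {P : Finpartition (s \ {(a : α), (b : α)})} (hP : IsNoncrossingBichromaticMatching c P) :
    ∃ Q : Finpartition s, IsNoncrossingBichromaticMatching c Q := by
  have hsub : {(a : α), (b : α)} ⊆ s := by simp [insert_subset_iff]
  let Q : Finpartition s :=
    P.extend (insert_ne_empty _ _) sdiff_disjoint (sdiff_union_of_subset hsub)
  have hQ : ∀ e ∈ Q.parts, e = {(a : α), (b : α)} ∨ e ∈ P.parts := fun _ => mem_insert.1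
  refine ⟨Q, fun e he => ?_, fun e he => ?_, fun e he f hf => ?_⟩
  · rcases hQ e he with rfl | heP
    · exact card_pair (Subtype.coe_ne_coe.2 hab.ne)
    · exact hP.card_eq_two e heP
  · rcases hQ e he with rfl | heP
    · simpa [Set.injOn_pair] using fun h => absurd h hc
    · exact hP.injOn e heP
  · rcases hQ e he with rfl | heP
    · exact not_crosses_pair_left hab (Q.le hf)
    rcases hQ f hf with rfl | hfP
    · exact not_crosses_pair_right hab (Q.le he)
    · exact hP.not_crosses e heP f hfP

end IsNoncrossingBichromaticMatching

theorem exists_covBy_apply_ne {β : Type*} [LinearOrder α] [LocallyFiniteOrder α] {f : α → β}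
    {x y : α} (h : f x ≠ f y) : ∃ a b, a ⋖ b ∧ f a ≠ f b := by
  by_contra! hconst
  wlog hxy : x ≤ y generalizing x y
  · exact this h.symm (le_of_not_ge hxy)
  have hlift := (le_iff_reflTransGen_covBy.1 hxy).lift f hconst
  rw [Relation.reflTransGen_eq_self] at hlift
  exact h hlift

section ColorClasses

variable [DecidableEq κ] {c : α → κ} {s : Finset α}

theorem exists_forall_card_filter_le (hs : s.Nonempty) :
    ∃ x ∈ s, ∀ k, #{i ∈ s | c i = k} ≤ #{i ∈ s | c i = c x} := by
  obtain ⟨x, hx, hmax⟩ := s.exists_max_image (fun x => #{i ∈ s | c i = c x}) hs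
  refine ⟨x, hx, fun k => ?_⟩
  obtain hk | ⟨y, hy⟩ := {i ∈ s | c i = k}.eq_empty_or_nonempty
  · simp [hk]
  · obtain ⟨hys, rfl⟩ := mem_filter.1 hy
    exact hmax y hys

theorem card_filter_pair [DecidableEq α] {a b : α} (hc : c a ≠ c b) (k : κ) :
    #{i ∈ {a, b} | c i = k} = if c a = k ∨ c b = k then 1 else 0 := by
  have hab : a ≠ b := ne_of_apply_ne c hc
  rw [card_filter, sum_pair hab]
  grind

theorem card_filter_add_card_filter_le {k l : κ} (hkl : k ≠ l) :
    #{i ∈ s | c i = k} + #{i ∈ s | c i = l} ≤ #s := by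
  classical
  rw [← card_union_of_disjoint (disjoint_filter.2 fun i _ hk hl => hkl (hk.symm.trans hl))]
  exact card_le_card (union_subset (filter_subset _ _) (filter_subset _ _))

theorem card_filter_sdiff_pair_le [DecidableEq α] {a b : α} {n : ℕ} {m : κ}
    (hsub : {a, b} ⊆ s) (hc : c a ≠ c b) (hs : #s = 2 * (n + 1))
    (hhalf : ∀ k, #{i ∈ s | c i = k} ≤ n + 1) (hm : c a = m ∨ c b = m)
    (hmax : ∀ k, #{i ∈ s | c i = k} ≤ #{i ∈ s | c i = m}) (k : κ) :
    #{i ∈ s \ {a, b} | c i = k} ≤ n := by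
  have hsplit (l : κ) : #{i ∈ s \ {a, b} | c i = l} + (if c a = l ∨ c b = l then 1 else 0) =
      #{i ∈ s | c i = l} := by
    rw [← card_filter_pair hc]
    simp only [card_filter]
    exact sum_sdiff hsub
  have hk := hsplit k
  by_cases hkab : c a = k ∨ c b = k
  · rw [if_pos hkab] at hk
    have := hhalf k
    omega
  · -- After the removal `k` and `m` share `2 * n` points, where `k` leads `m` by at most one.
    have hkm : k ≠ m := by rintro rfl; exact hkab hm
    have hmk := hmax k
    have hrest := card_filter_add_card_filter_le (s := s \ {a, b}) (c := c) hkm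
    rw [card_sdiff_of_subset hsub, card_pair (ne_of_apply_ne c hc), hs] at hrest
    rw [if_neg hkab] at hk
    rw [← hsplit m, if_pos hm] at hmk
    omega

theorem exists_covBy_card_filter_sdiff_pair_le [LinearOrder α] {n : ℕ} (hs : #s = 2 * (n + 1))
    (hhalf : ∀ k, #{i ∈ s | c i = k} ≤ n + 1) :
    ∃ a b : s, a ⋖ b ∧ c a ≠ c b ∧ ∀ k, #{i ∈ s \ {(a : α), (b : α)} | c i = k} ≤ n := by
  obtain ⟨x, hx, hmax⟩ := exists_forall_card_filter_le (c := c) (card_pos.1 (by omega : 0 < #s))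
  obtain ⟨y, hy, hyx⟩ : ∃ y ∈ s, c y ≠ c x := by
    by_contra! hall
    have := hhalf (c x)
    rw [filter_true_of_mem hall] at this
    omega
  let := Fintype.toLocallyFiniteOrder (α := s)
  obtain ⟨a, b, hab, hne⟩ := exists_covBy_apply_ne (f := fun i : s => c i = c x)
    (x := ⟨x, hx⟩) (y := ⟨y, hy⟩) (by simp [hyx])
  have hc : c a ≠ c b := fun h => hne (by simp only [h])
  have hmem : c a = c x ∨ c b = c x := by grind
  exact ⟨a, b, hab, hc,
    card_filter_sdiff_pair_le (by simp [insert_subset_iff]) hc hs hhalf hmem hmax⟩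

end ColorClasses

theorem card_filter_eq_of_balanced {s : Finset α} {c : α → Bool} {n : ℕ} (hs : #s = 2 * n)
    (hc : #{i ∈ s | c i = true} = n) (k : Bool) : #{i ∈ s | c i = k} = n := by
  have hadd := card_filter_add_card_filter_not (s := s) (fun i => c i = true)
  simp only [Bool.not_eq_true] at hadd
  cases k <;> omega

theorem noncrossing_perfect_bichromatic_matching_exists_general [LinearOrder α] [DecidableEq κ]
    (c : α → κ) {n : ℕ} {s : Finset α} (hs : #s = 2 * n)
    (hhalf : ∀ k, #{i ∈ s | c i = k} ≤ n) :
    ∃ P : Finpartition s, IsNoncrossingBichromaticMatching c P := by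
  induction n generalizing s with
  | zero =>
    obtain rfl := card_eq_zero.1 hs
    exact ⟨Finpartition.empty _, by simp, by simp, by simp⟩
  | succ n ih =>
    obtain ⟨a, b, hab, hc, hrest⟩ := exists_covBy_card_filter_sdiff_pair_le hs hhalf
    have hcard : #(s \ {(a : α), (b : α)}) = 2 * n := by
      rw [card_sdiff_of_subset (by simp [insert_subset_iff]), card_pair (by simpa using hab.ne)]
      omega
    obtain ⟨P, hP⟩ := ih hcard hrest
    exact hP.exists_of_covBy hab hc

/-- For every balanced 2-coloring of `2n` collinear points there exists a
non-crossing perfect bichromatic matching: a partition of `Fin (2n)` into `n`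
bichromatic pairs, no two of which interleave. -/
theorem noncrossing_perfect_bichromatic_matching_exists
    (n : ℕ) (hn : 1 ≤ n) (c : Fin (2 * n) → Bool)
    (hbal : (Finset.univ.filter (fun i => c i = true)).card = n) :
    ∃ M : Finset (Finset (Fin (2 * n))),
      M.card = n ∧
      (∀ e ∈ M, e.card = 2) ∧
      (∀ e ∈ M, ∀ f ∈ M, e ≠ f → Disjoint e f) ∧
      (∀ i : Fin (2 * n), ∃ e ∈ M, i ∈ e) ∧
      (∀ e ∈ M, ∀ a b : Fin (2 * n), e = {a, b} → a ≠ b → c a ≠ c b) ∧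
      (∀ e ∈ M, ∀ f ∈ M, ∀ a b a' b' : Fin (2 * n), e = {a, b} → f = {a', b'} →
        ¬ Interleaves ((a : ℕ), (b : ℕ)) ((a' : ℕ), (b' : ℕ))) := by
  obtain ⟨P, hP⟩ := noncrossing_perfect_bichromatic_matching_exists_general c (by simp)
    fun k => (card_filter_eq_of_balanced (by simp) hbal k).le
  exact ⟨P.parts, hP.card_parts (by simp), hP.card_eq_two, fun _ he _ hf => P.disjoint he hf,
    fun i => P.exists_mem (mem_univ i), fun _ he _ _ => hP.apply_ne_of_eq_pair he,
    fun _ he _ hf _ _ _ _ h h' => hP.not_interleaves Fin.val_strictMono (h ▸ he) (h' ▸ hf)⟩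
end

section
/- Let c be a balanced coloring of the 2n collinear points and let t be the smallest positive integer such that among the first t points the number of red points equals the number of blue points (such t exists since the full set is balanced). Then t is even, say t = 2m, and the first and the t-th point have different colors: c 0 ≠ c (2m−1). -/
/-- The prefix consisting of the first `t` points is color-balanced:
the number of red points among them is exactly `t / 2`. -/
def PrefixBalanced {N : ℕ} (c : Fin N → Bool) (t : ℕ) : Prop :=
  2 * ((Finset.univ.filter (fun i : Fin N => (i : ℕ) < t ∧ c i = true)).card) = t

/-!
The excess of red over blue points in a growing prefix is a walk on `ℤ` with steps `±1` that starts
at `0`. It cannot change sign without visiting `0`, so before its first return to `0` it has the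
sign of its first step. The step that returns to `0` has the opposite sign.
-/

theorem sign_eq_sign_of_abs_sub_le_one {a b : ℤ} (ha : a ≠ 0) (hb : b ≠ 0) (hab : |b - a| ≤ 1) :
    SignType.sign b = SignType.sign a := by
  rw [abs_le] at hab
  rcases ha.lt_or_gt with ha | ha
  · rw [sign_neg ha, sign_neg (by omega)]
  · rw [sign_pos ha, sign_pos (by omega)]

theorem sign_eq_sign_of_forall_ne_zero {f : ℕ → ℤ} {a b : ℕ} (hab : a ≤ b)
    (hstep : ∀ k, a ≤ k → k < b → |f (k + 1) - f k| ≤ 1)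
    (hne : ∀ k, a ≤ k → k ≤ b → f k ≠ 0) :
    SignType.sign (f b) = SignType.sign (f a) := by
  induction b, hab using Nat.le_induction with
  | base => rfl
  | succ b hab ih =>
    calc SignType.sign (f (b + 1))
        = SignType.sign (f b) :=
          sign_eq_sign_of_abs_sub_le_one (hne b hab b.le_succ) (hne (b + 1) (by omega) le_rfl)
            (hstep b hab b.lt_succ_self)
      _ = SignType.sign (f a) :=
          ih (fun k hak hkb => hstep k hak (by omega)) fun k hak hkb => hne k hak (by omega)

section Coloring

variable {N : ℕ} (c : Fin N → Bool)

/-- The number of red points minus the number of blue points among the first `t ≤ N` points,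
with the number of blue points expressed as `t` minus the number of red points. -/
def redExcess (t : ℕ) : ℤ :=
  2 * (Finset.univ.filter fun i : Fin N => (i : ℕ) < t ∧ c i = true).card - t

variable {c} in
theorem prefixBalanced_iff_redExcess_eq_zero {t : ℕ} :
    PrefixBalanced c t ↔ redExcess c t = 0 := by
  unfold PrefixBalanced redExcess
  omega

@[simp]
theorem redExcess_zero : redExcess c 0 = 0 := by
  simp [redExcess]

theorem card_red_prefix_succ {s : ℕ} (hs : s < N) :
    (Finset.univ.filter fun i : Fin N => (i : ℕ) < s + 1 ∧ c i = true).card =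
      (Finset.univ.filter fun i : Fin N => (i : ℕ) < s ∧ c i = true).card +
        (bif c ⟨s, hs⟩ then 1 else 0) := by
  have prefix_succ : Finset.univ.filter (fun i : Fin N => (i : ℕ) < s + 1) =
      insert ⟨s, hs⟩ (Finset.univ.filter fun i : Fin N => (i : ℕ) < s) := by
    ext i
    simp [Fin.ext_iff, le_iff_eq_or_lt]
  rw [← Finset.filter_filter, ← Finset.filter_filter, prefix_succ, Finset.filter_insert]
  cases c ⟨s, hs⟩ <;> simp

theorem redExcess_succ {s : ℕ} (hs : s < N) :
    redExcess c (s + 1) = redExcess c s + (bif c ⟨s, hs⟩ then 1 else -1) := by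
  rw [redExcess, redExcess, card_red_prefix_succ c hs]
  cases c ⟨s, hs⟩ <;> dsimp only [cond] <;> omega

theorem abs_redExcess_succ_sub {s : ℕ} (hs : s < N) :
    |redExcess c (s + 1) - redExcess c s| = 1 := by
  rw [redExcess_succ c hs, add_sub_cancel_left]
  cases c ⟨s, hs⟩ <;> rfl

end Coloring

theorem shortest_balanced_prefix_even_and_endpoints_differ_general
    {N : ℕ} (c : Fin N → Bool) (t : ℕ) (htpos : 0 < t) (htle : t ≤ N)
    (htb : PrefixBalanced c t) (hmin : ∀ s : ℕ, 0 < s → s < t → ¬ PrefixBalanced c s) :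
    ∃ m : ℕ, t = 2 * m ∧ c ⟨0, by omega⟩ ≠ c ⟨t - 1, by omega⟩ := by
  refine ⟨_, htb.symm, ?_⟩
  obtain ⟨u, rfl⟩ := Nat.exists_eq_add_one.mpr htpos
  have one_le : 1 ≤ u := by
    unfold PrefixBalanced at htb
    omega
  have first_step : redExcess c 1 = bif c ⟨0, by omega⟩ then 1 else -1 := by
    simpa using redExcess_succ c (s := 0) (by omega)
  have last_step : redExcess c u = -(bif c ⟨u, by omega⟩ then 1 else -1) := by
    rw [eq_neg_iff_add_eq_zero, ← redExcess_succ, ← prefixBalanced_iff_redExcess_eq_zero]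
    exact htb
  have same_sign : SignType.sign (redExcess c u) = SignType.sign (redExcess c 1) :=
    sign_eq_sign_of_forall_ne_zero one_le
      (fun k _ hku => (abs_redExcess_succ_sub c (by omega)).le)
      fun k hk hku => mt prefixBalanced_iff_redExcess_eq_zero.mpr (hmin k hk (by omega))
  intro (same_color : c ⟨0, _⟩ = c ⟨u, _⟩)
  rw [first_step, last_step, same_color] at same_sign
  cases h : c ⟨u, by omega⟩ <;> simp [h] at same_sign

/-- For a balanced coloring of `2n` collinear points, the shortest nonempty balanced
prefix has even length `2m`, and its first and last points have different colors. -/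
theorem shortest_balanced_prefix_even_and_endpoints_differ
    (n : ℕ) (hn : 1 ≤ n) (c : Fin (2 * n) → Bool)
    (hbal : (Finset.univ.filter (fun i => c i = true)).card = n)
    (t : ℕ) (htpos : 0 < t) (htle : t ≤ 2 * n)
    (htb : PrefixBalanced c t)
    (hmin : ∀ s : ℕ, 0 < s → s ≤ 2 * n → PrefixBalanced c s → t ≤ s) :
    ∃ m : ℕ, t = 2 * m ∧ c ⟨0, by omega⟩ ≠ c ⟨t - 1, by omega⟩ :=
  shortest_balanced_prefix_even_and_endpoints_differ_general c t htpos htle htb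
    fun s hs hst hsb => (hmin s hs (hst.le.trans htle) hsb).not_gt hst
end

section
/- Let c be a balanced coloring of the 2n collinear points with strictly increasing positions x : Fin (2n) → ℝ, and let 2m be the length of the shortest nonempty balanced prefix. Then every minimum-weight non-crossing perfect bichromatic matching M (i.e., M is a non-crossing perfect bichromatic matching and no non-crossing perfect bichromatic matching has strictly smaller total weight) contains the pair {0, 2m−1} matching the first point with the last point of that prefix. -/
/-- `M` is a non-crossing perfect bichromatic matching of the `N` collinear points:
its elements are pairs `(a, b)` with `a < b` of differently colored points, every
point belongs to exactly one pair, and no two pairs interleave. -/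
def IsNCMatching {N : ℕ} (c : Fin N → Bool) (M : Finset (Fin N × Fin N)) : Prop :=
  (∀ p ∈ M, p.1 < p.2 ∧ c p.1 ≠ c p.2) ∧
  (∀ i : Fin N, ∃! p, p ∈ M ∧ (i = p.1 ∨ i = p.2)) ∧
  (∀ p ∈ M, ∀ q ∈ M, p ≠ q →
    ¬ Interleaves (((p.1 : ℕ)), ((p.2 : ℕ))) (((q.1 : ℕ)), ((q.2 : ℕ))))

/-- The total weight of a matching: each pair weighs the distance between the
positions of its endpoints. -/
def matchingWeight {N : ℕ} (x : Fin N → ℝ) (M : Finset (Fin N × Fin N)) : ℝ :=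
  ∑ p ∈ M, |x p.2 - x p.1|

/-!
Weigh red points by `1` and blue points by `-1`. In a bichromatic matching the two ends of an edge
cancel, so the excess of a prefix is the sum of the signs of the left ends of the edges leaving
it. If the prefix is balanced and some edge leaves it, then edges of both orientations do. In a
non-crossing matching the edges leaving a prefix are nested, so some two consecutive ones,
`(a, b)` around `(a', b')`, have opposite orientations; replacing them by `(a, a')` and `(b', b)`
keeps the matching non-crossing and saves twice the distance from `a'` to `b'`. Hence no edge of a
minimum-weight matching leaves a balanced prefix. On the other hand, no edge leaves the prefix
ending at the partner `b` of the first point, as it would interleave with the edge of the first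
point, so that prefix is balanced. The edge of the first point therefore ends neither after nor
before the end of the shortest balanced prefix.
-/

/-- The sign of a color: red points count `1` and blue points `-1`. -/
def colorSign : Bool → ℤ
  | true => 1
  | false => -1

/-- The number of red points minus the number of blue points among the first `t` points. -/
def prefixExcess {N : ℕ} (c : Fin N → Bool) (t : ℕ) : ℤ :=
  ∑ i : Fin N with i.val < t, colorSign (c i)

/-- The edges of `M` leaving the prefix of length `t`: those with their left end among the first
`t` points and their right end outside. -/
def cutEdges {N : ℕ} (M : Finset (Fin N × Fin N)) (t : ℕ) : Finset (Fin N × Fin N) :=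
  {p ∈ M | (p.1 : ℕ) < t ∧ t ≤ (p.2 : ℕ)}

/-- The exchange step on an edge `p` around an edge `q`: the two are replaced by the edge joining
their left ends and the edge joining their right ends. -/
def uncross {N : ℕ} (M : Finset (Fin N × Fin N)) (p q : Fin N × Fin N) :
    Finset (Fin N × Fin N) :=
  {(p.1, q.1), (q.2, p.2)} ∪ M \ {p, q}

lemma colorSign_ne_zero (b : Bool) : colorSign b ≠ 0 := by
  cases b <;> decide

lemma colorSign_add_eq_zero {a b : Bool} (h : a ≠ b) : colorSign a + colorSign b = 0 := by
  revert a b; decide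

lemma colorSign_eq_two_mul_sub_one (b : Bool) :
    colorSign b = 2 * (if b = true then 1 else 0) - 1 := by
  cases b <;> rfl

lemma Interleaves.symm {p q : ℕ × ℕ} (h : Interleaves p q) : Interleaves q p :=
  Or.symm h

section

variable {N t : ℕ} {c : Fin N → Bool} {M : Finset (Fin N × Fin N)} {p q : Fin N × Fin N}

lemma mem_cutEdges : p ∈ cutEdges M t ↔ p ∈ M ∧ (p.1 : ℕ) < t ∧ t ≤ (p.2 : ℕ) :=
  Finset.mem_filter

lemma mem_uncross {e : Fin N × Fin N} :
    e ∈ uncross M p q ↔ e = (p.1, q.1) ∨ e = (q.2, p.2) ∨ (e ∈ M ∧ e ≠ p ∧ e ≠ q) := by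
  simp only [uncross, Finset.mem_union, Finset.mem_insert, Finset.mem_singleton,
    Finset.mem_sdiff, not_or, or_assoc, ne_eq]

lemma prefixBalanced_iff_prefixExcess_eq_zero (ht : t ≤ N) :
    PrefixBalanced c t ↔ prefixExcess c t = 0 := by
  have excess_eq : prefixExcess c t =
      2 * (Finset.univ.filter fun i : Fin N => (i : ℕ) < t ∧ c i = true).card - t := by
    simp only [prefixExcess, colorSign_eq_two_mul_sub_one, Finset.sum_sub_distrib,
      ← Finset.mul_sum, Finset.sum_boole, Finset.filter_filter, Finset.sum_const,
      Fin.card_filter_val_lt, min_eq_right ht, nsmul_eq_mul, mul_one]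
  rw [excess_eq, PrefixBalanced]
  omega

namespace IsNCMatching

lemma fst_lt_snd (hM : IsNCMatching c M) (hp : p ∈ M) : p.1 < p.2 :=
  (hM.1 p hp).1

lemma color_ne (hM : IsNCMatching c M) (hp : p ∈ M) : c p.1 ≠ c p.2 :=
  (hM.1 p hp).2

lemma eq_of_common_endpoint (hM : IsNCMatching c M) (hp : p ∈ M) (hq : q ∈ M) {i : Fin N}
    (hip : i = p.1 ∨ i = p.2) (hiq : i = q.1 ∨ i = q.2) : p = q :=
  (hM.2.1 i).unique ⟨hp, hip⟩ ⟨hq, hiq⟩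

lemma endpoints_ne (hM : IsNCMatching c M) (hp : p ∈ M) (hq : q ∈ M) (hpq : p ≠ q) :
    p.1 ≠ q.1 ∧ p.1 ≠ q.2 ∧ p.2 ≠ q.1 ∧ p.2 ≠ q.2 := by
  have unshared {i : Fin N} (hip : i = p.1 ∨ i = p.2) : ¬ (i = q.1 ∨ i = q.2) :=
    fun hiq => hpq (hM.eq_of_common_endpoint hp hq hip hiq)
  simpa only [not_or, and_assoc] using And.intro (unshared (Or.inl rfl)) (unshared (Or.inr rfl))

lemma sum_eq_sum_edges {A : Type*} [AddCommMonoid A] (hM : IsNCMatching c M) (f : Fin N → A) :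
    ∑ i, f i = ∑ p ∈ M, (f p.1 + f p.2) := by
  have cover : (Finset.univ : Finset (Fin N)) = M.biUnion fun p => {p.1, p.2} := by
    ext i
    obtain ⟨p, hp, -⟩ := hM.2.1 i
    simpa using ⟨p.1, p.2, hp⟩
  have disjoint : (M : Set (Fin N × Fin N)).PairwiseDisjoint fun p => ({p.1, p.2} : Finset _) := by
    intro p hp q hq hpq
    refine Finset.disjoint_left.2 fun i hip hiq => hpq ?_
    exact hM.eq_of_common_endpoint hp hq (by simpa using hip) (by simpa using hiq)
  rw [cover, Finset.sum_biUnion disjoint]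
  exact Finset.sum_congr rfl fun p hp => Finset.sum_pair (hM.fst_lt_snd hp).ne

lemma prefixExcess_eq_sum_cutEdges (hM : IsNCMatching c M) (t : ℕ) :
    prefixExcess c t = ∑ p ∈ cutEdges M t, colorSign (c p.1) := by
  rw [prefixExcess, Finset.sum_filter, hM.sum_eq_sum_edges, cutEdges, Finset.sum_filter]
  refine Finset.sum_congr rfl fun p hp => ?_
  have ordered := Fin.lt_def.1 (hM.fst_lt_snd hp)
  have cancel := colorSign_add_eq_zero (hM.color_ne hp)
  split_ifs <;> omega

lemma prefixBalanced_of_cutEdges_eq_empty (hM : IsNCMatching c M) (ht : t ≤ N)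
    (hcut : cutEdges M t = ∅) : PrefixBalanced c t := by
  rw [prefixBalanced_iff_prefixExcess_eq_zero ht, hM.prefixExcess_eq_sum_cutEdges, hcut,
    Finset.sum_empty]

lemma snd_lt_snd_of_mem_cutEdges (hM : IsNCMatching c M) (hp : p ∈ cutEdges M t)
    (hq : q ∈ cutEdges M t) (hpq : p.1 < q.1) : q.2 < p.2 := by
  rw [mem_cutEdges] at hp hq
  have hne : p ≠ q := fun h => hpq.ne (congrArg Prod.fst h)
  obtain ⟨-, -, -, hsnd⟩ := hM.endpoints_ne hp.1 hq.1 hne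
  have hcross := hM.2.2 p hp.1 q hq.1 hne
  simp only [Interleaves] at hcross
  omega

lemma fst_lt_fst_of_mem_cutEdges_succ_snd (hM : IsNCMatching c M) (hp : p ∈ M)
    (hq : q ∈ cutEdges M (p.2 + 1)) : q.1 < p.1 := by
  rw [mem_cutEdges] at hq
  have hne : p ≠ q := by rintro rfl; omega
  obtain ⟨hfst, -, hmid, -⟩ := hM.endpoints_ne hp hq.1 hne
  have hcross := hM.2.2 p hp q hq.1 hne
  simp only [Interleaves] at hcross
  omega

lemma exists_cutEdges_colors_ne (hM : IsNCMatching c M) (ht : t ≤ N) (hbal : PrefixBalanced c t)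
    (hcut : (cutEdges M t).Nonempty) :
    ∃ p ∈ cutEdges M t, ∃ q ∈ cutEdges M t, p.1 < q.1 ∧ c p.1 ≠ c q.1 := by
  rw [prefixBalanced_iff_prefixExcess_eq_zero ht, hM.prefixExcess_eq_sum_cutEdges] at hbal
  obtain ⟨e, he⟩ := hcut
  have hnonzero : ∃ e ∈ cutEdges M t, colorSign (c e.1) ≠ 0 := ⟨e, he, colorSign_ne_zero _⟩
  obtain ⟨p, hp, hpos⟩ := Finset.exists_pos_of_sum_zero_of_exists_nonzero _ hbal hnonzero
  obtain ⟨q, hq, hneg⟩ : ∃ q ∈ cutEdges M t, colorSign (c q.1) < 0 := by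
    by_contra! hnonneg
    exact hpos.ne' ((Finset.sum_eq_zero_iff_of_nonneg hnonneg).1 hbal p hp)
  have hcolor : c p.1 ≠ c q.1 := fun h => (hneg.trans hpos).ne (by rw [h])
  rcases lt_or_gt_of_ne (fun h => hcolor (congrArg c h) : p.1 ≠ q.1) with hlt | hlt
  · exact ⟨p, hp, q, hq, hlt, hcolor⟩
  · exact ⟨q, hq, p, hp, hlt, hcolor.symm⟩

lemma exists_consecutive_cutEdges_colors_ne (hM : IsNCMatching c M) (ht : t ≤ N)
    (hbal : PrefixBalanced c t) (hcut : (cutEdges M t).Nonempty) :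
    ∃ p ∈ cutEdges M t, ∃ q ∈ cutEdges M t, p.1 < q.1 ∧ c p.1 ≠ c q.1 ∧
      ∀ r ∈ cutEdges M t, p.1 < r.1 → q.1 ≤ r.1 := by
  obtain ⟨p₀, hp₀, q₀, hq₀, hlt₀, hcolor₀⟩ := hM.exists_cutEdges_colors_ne ht hbal hcut
  let pairs := {e ∈ cutEdges M t ×ˢ cutEdges M t | e.1.1 < e.2.1 ∧ c e.1.1 ≠ c e.2.1}
  have mem_pairs (p q) : (p, q) ∈ pairs ↔
      (p ∈ cutEdges M t ∧ q ∈ cutEdges M t) ∧ p.1 < q.1 ∧ c p.1 ≠ c q.1 := by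
    rw [Finset.mem_filter, Finset.mem_product]
  obtain ⟨⟨p, q⟩, hpq, closest⟩ := pairs.exists_min_image (fun e => (e.2.1 - e.1.1 : ℕ))
    ⟨(p₀, q₀), (mem_pairs p₀ q₀).2 ⟨⟨hp₀, hq₀⟩, hlt₀, hcolor₀⟩⟩
  obtain ⟨⟨hp, hq⟩, hlt, hcolor⟩ := (mem_pairs p q).1 hpq
  refine ⟨p, hp, q, hq, hlt, hcolor, fun r hr hpr => ?_⟩
  by_contra! hrq
  -- The color of `r.1` differs from that of `p.1` or of `q.1`, which gives a closer pair.
  by_cases hcolor_r : c p.1 = c r.1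
  · have := closest (r, q) ((mem_pairs r q).2 ⟨⟨hr, hq⟩, hrq, hcolor_r ▸ hcolor⟩)
    simp only at this
    omega
  · have := closest (p, r) ((mem_pairs p r).2 ⟨⟨hp, hr⟩, hpr, hcolor_r⟩)
    simp only at this
    omega

end IsNCMatching

lemma matchingWeight_uncross_lt {x : Fin N → ℝ} (hx : StrictMono x) (hp : p ∈ M) (hq : q ∈ M)
    (hfst : p.1 < q.1) (hmid : q.1 < q.2) (hsnd : q.2 < p.2) :
    matchingWeight x (uncross M p q) < matchingWeight x M := by
  let w : Fin N × Fin N → ℝ := fun e => |x e.2 - x e.1|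
  have hpq : p ≠ q := fun h => hfst.ne (congrArg Prod.fst h)
  have hnew : (p.1, q.1) ≠ (q.2, p.2) := fun h => (hfst.trans hmid).ne (congrArg Prod.fst h)
  have shorter : w (p.1, q.1) + w (q.2, p.2) < w p + w q := by
    have hmid_x := hx hmid
    simp only [w, abs_of_pos (sub_pos.2 (hx hfst)), abs_of_pos (sub_pos.2 (hx hsnd)),
      abs_of_pos (sub_pos.2 hmid_x), abs_of_pos (sub_pos.2 (hx (hfst.trans (hmid.trans hsnd))))]
    linarith
  calc matchingWeight x (uncross M p q)
      ≤ ∑ e ∈ {(p.1, q.1), (q.2, p.2)}, w e + ∑ e ∈ M \ {p, q}, w e := by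
        rw [← Finset.sum_union_inter]
        exact le_add_of_nonneg_right (Finset.sum_nonneg fun e _ => abs_nonneg _)
    _ < ∑ e ∈ {p, q}, w e + ∑ e ∈ M \ {p, q}, w e := by
        rw [Finset.sum_pair hnew, Finset.sum_pair hpq]
        exact add_lt_add_left shorter _
    _ = matchingWeight x M := by
        rw [add_comm]
        exact Finset.sum_sdiff (Finset.insert_subset hp (Finset.singleton_subset_iff.2 hq))

namespace IsNCMatching

lemma uncross_existsUnique (hM : IsNCMatching c M) (hp : p ∈ M) (hq : q ∈ M)
    (hfst : p.1 < q.1) (hsnd : q.2 < p.2) (i : Fin N) :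
    ∃! e, e ∈ uncross M p q ∧ (i = e.1 ∨ i = e.2) := by
  have hmid := hM.fst_lt_snd hq
  obtain ⟨e, ⟨he, hie⟩, hunique⟩ := hM.2.1 i
  simp only [mem_uncross]
  by_cases hleft : i = p.1 ∨ i = q.1
  · exact ⟨(p.1, q.1), by grind, by grind⟩
  by_cases hright : i = q.2 ∨ i = p.2
  · exact ⟨(q.2, p.2), by grind, by grind⟩
  · exact ⟨e, by grind, by grind⟩

lemma uncross_not_interleaves (hM : IsNCMatching c M) (hp : p ∈ M) (hq : q ∈ M)
    (hfst : p.1 < q.1) (hsnd : q.2 < p.2)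
    (hconsec : ∀ r ∈ M, p.1 < r.1 → r.1 < q.1 → r.2 ≤ q.2) {r : Fin N × Fin N} (hr : r ∈ M)
    (hrp : r ≠ p) (hrq : r ≠ q) :
    ¬ Interleaves (r.1, r.2) (p.1, q.1) ∧ ¬ Interleaves (r.1, r.2) (q.2, p.2) := by
  have avoids_p := hM.endpoints_ne hr hp hrp
  have avoids_q := hM.endpoints_ne hr hq hrq
  have hcross_p := hM.2.2 r hr p hp hrp
  have hcross_q := hM.2.2 r hr q hq hrq
  have := hconsec r hr
  have := hM.fst_lt_snd hr
  have := hM.fst_lt_snd hq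
  simp only [Interleaves] at hcross_p hcross_q ⊢
  omega

lemma uncross (hM : IsNCMatching c M) (hp : p ∈ M) (hq : q ∈ M) (hfst : p.1 < q.1)
    (hsnd : q.2 < p.2) (hcolor : c p.1 ≠ c q.1)
    (hconsec : ∀ r ∈ M, p.1 < r.1 → r.1 < q.1 → r.2 ≤ q.2) :
    IsNCMatching c (uncross M p q) := by
  have hmid := hM.fst_lt_snd hq
  have hcolor' : c q.2 ≠ c p.2 := by
    rw [Bool.eq_not.2 (hM.color_ne hp).symm, Bool.eq_not.2 (hM.color_ne hq).symm]
    exact fun h => hcolor (Bool.not_inj h).symm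
  have new_pair : ¬ Interleaves (p.1, q.1) (q.2, p.2) := by
    simp only [Interleaves]
    omega
  refine ⟨?_, hM.uncross_existsUnique hp hq hfst hsnd, ?_⟩
  · intro e he
    rcases mem_uncross.1 he with rfl | rfl | ⟨heM, -, -⟩
    · exact ⟨hfst, hcolor⟩
    · exact ⟨hsnd, hcolor'⟩
    · exact hM.1 e heM
  · have old_new {r} := hM.uncross_not_interleaves hp hq hfst hsnd hconsec (r := r)
    intro e he e' he' hne
    rcases mem_uncross.1 he with rfl | rfl | ⟨heM, hep, heq⟩ <;>
      rcases mem_uncross.1 he' with rfl | rfl | ⟨he'M, he'p, he'q⟩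
    · exact absurd rfl hne
    · exact new_pair
    · exact fun h => (old_new he'M he'p he'q).1 h.symm
    · exact fun h => new_pair h.symm
    · exact absurd rfl hne
    · exact fun h => (old_new he'M he'p he'q).2 h.symm
    · exact (old_new heM hep heq).1
    · exact (old_new heM hep heq).2
    · exact hM.2.2 e heM e' he'M hne

lemma exists_matchingWeight_lt_of_cutEdges_nonempty (hM : IsNCMatching c M) {x : Fin N → ℝ}
    (hx : StrictMono x) (ht : t ≤ N) (hbal : PrefixBalanced c t) (hcut : (cutEdges M t).Nonempty) :
    ∃ M', IsNCMatching c M' ∧ matchingWeight x M' < matchingWeight x M := by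
  obtain ⟨p, hp, q, hq, hfst, hcolor, consecutive⟩ :=
    hM.exists_consecutive_cutEdges_colors_ne ht hbal hcut
  have hsnd := hM.snd_lt_snd_of_mem_cutEdges hp hq hfst
  obtain ⟨hpM, -, -⟩ := mem_cutEdges.1 hp
  obtain ⟨hqM, hq_fst, hq_snd⟩ := mem_cutEdges.1 hq
  refine ⟨_, hM.uncross hpM hqM hfst hsnd hcolor fun r hr hpr hrq => ?_,
    matchingWeight_uncross_lt hx hpM hqM hfst (hM.fst_lt_snd hqM) hsnd⟩
  by_contra! hqr
  exact hrq.not_ge (consecutive r (mem_cutEdges.2 ⟨hr, by omega, by omega⟩) hpr)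

lemma exists_edge_of_val_eq_zero (hM : IsNCMatching c M) {i : Fin N} (hi : i.val = 0) :
    ∃ j, (i, j) ∈ M := by
  obtain ⟨⟨a, b⟩, ⟨hab, rfl | rfl⟩, -⟩ := hM.2.1 i
  · exact ⟨b, hab⟩
  · have : a < i := hM.fst_lt_snd hab
    omega

lemma cutEdges_succ_partner_eq_empty (hM : IsNCMatching c M) {i j : Fin N} (hi : i.val = 0)
    (hij : (i, j) ∈ M) : cutEdges M (j + 1) = ∅ := by
  refine Finset.eq_empty_of_forall_notMem fun q hq => ?_
  have : q.1.val < i.val := hM.fst_lt_fst_of_mem_cutEdges_succ_snd hij hq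
  omega

end IsNCMatching

end

/-- If `2m` is the length of the shortest nonempty balanced prefix, then every
minimum-weight non-crossing perfect bichromatic matching contains the pair
matching the first point with the `2m`-th point. -/
theorem min_noncrossing_matching_contains_first_balanced_prefix_edge
    (n : ℕ) (hn : 1 ≤ n) (c : Fin (2 * n) → Bool)
    (hbal : (Finset.univ.filter (fun i => c i = true)).card = n)
    (x : Fin (2 * n) → ℝ) (hx : StrictMono x)
    (m : ℕ) (hmpos : 0 < m) (hmle : 2 * m ≤ 2 * n)
    (hmb : PrefixBalanced c (2 * m))
    (hmin : ∀ s : ℕ, 0 < s → s ≤ 2 * n → PrefixBalanced c s → 2 * m ≤ s)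
    (M : Finset (Fin (2 * n) × Fin (2 * n)))
    (hM : IsNCMatching c M)
    (hopt : ∀ M' : Finset (Fin (2 * n) × Fin (2 * n)),
      IsNCMatching c M' → matchingWeight x M ≤ matchingWeight x M') :
    (⟨0, by omega⟩, (⟨2 * m - 1, by omega⟩ : Fin (2 * n))) ∈ M := by
  obtain ⟨j, h_edge⟩ := hM.exists_edge_of_val_eq_zero (i := ⟨0, by omega⟩) rfl
  have prefix_le : 2 * m ≤ j + 1 :=
    hmin (j + 1) (by omega) (by omega) <| hM.prefixBalanced_of_cutEdges_eq_empty (by omega)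
      (hM.cutEdges_succ_partner_eq_empty rfl h_edge)
  have uncut : cutEdges M (2 * m) = ∅ := by
    by_contra hcut
    obtain ⟨M', hM', lighter⟩ := hM.exists_matchingWeight_lt_of_cutEdges_nonempty hx hmle hmb
      (Finset.nonempty_iff_ne_empty.2 hcut)
    exact lighter.not_ge (hopt M' hM')
  have lt_prefix : j.val < 2 * m := by
    by_contra! hj
    exact Finset.eq_empty_iff_forall_notMem.1 uncut _
      (mem_cutEdges.2 ⟨h_edge, Nat.mul_pos two_pos hmpos, hj⟩)
  have hj : j = ⟨2 * m - 1, by omega⟩ := Fin.ext (by simp only; omega)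
  exact hj ▸ h_edge
end

section
/- Let k be even with k ∣ n. Then there exists a bichromatic travelling salesman tour of the 2n chunked equidistant points on the circle whose total length is exactly n·k + 2n + 2n/k (that is, n(k + 2 + 2/k)). -/
/-- The cyclic successor of an index. -/
def nextIdx {m : ℕ} (i : Fin m) : Fin m := ⟨(i.val + 1) % m, Nat.mod_lt _ i.pos⟩

/-- Point `i` of the chunked configuration is red iff `⌊i/k⌋` is even
(the points form alternately colored chunks of `k` consecutive points). -/
def redPt (k : ℕ) {m : ℕ} (i : Fin m) : Bool := decide ((i.val / k) % 2 = 0)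

/-- The length of the edge between points `i` and `j` of the `2n` equidistant
points on the circle: one more than the hop distance along the circle. -/
def edgeLen (n : ℕ) (i j : Fin (2 * n)) : ℕ :=
  min (((j : ℕ) + 2 * n - (i : ℕ)) % (2 * n)) (((i : ℕ) + 2 * n - (j : ℕ)) % (2 * n)) + 1

/-- `v` is a bichromatic travelling salesman tour: a cyclic enumeration of all
`2n` points in which cyclically consecutive points have different colors. -/
def IsBichromaticTour (n k : ℕ) (v : Fin (2 * n) → Fin (2 * n)) : Prop :=
  Function.Bijective v ∧ ∀ i : Fin (2 * n), redPt k (v i) ≠ redPt k (v (nextIdx i))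

/-- The total length of a tour. -/
def tourLength (n : ℕ) (v : Fin (2 * n) → Fin (2 * n)) : ℕ :=
  ∑ i : Fin (2 * n), edgeLen n (v i) (v (nextIdx i))

/-!
Enumerate the red points in clockwise order, and likewise the blue points. The tour alternates
colors: after the red point number `m + k / 2` it visits the blue point number `m`, and then the red
point number `m + 1 + k / 2`. The offset `k / 2` makes every red-to-blue edge span exactly `k / 2`
hops, while a blue-to-red edge spans `k / 2 - 1` or `k / 2 + 1` hops according to whether
`⌊(m + 1 + k / 2) / k⌋` equals `⌊m / k⌋` or exceeds it by one. Summed over all `m < n`, these floor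
differences telescope.

The walk lives on the infinite line of points `0, 1, 2, …`; the tour is its reduction modulo
`2 * n`.
-/

theorem sum_range_two_mul {M : Type*} [AddCommMonoid M] (f : ℕ → M) (n : ℕ) :
    ∑ i ∈ Finset.range (2 * n), f i = ∑ m ∈ Finset.range n, (f (2 * m) + f (2 * m + 1)) := by
  induction n with
  | zero => simp
  | succ n ih =>
    rw [mul_add_one, Finset.sum_range_succ, Finset.sum_range_succ, ih, Finset.sum_range_succ,
      add_assoc]

theorem sum_range_add_div {n k : ℕ} (hdvd : k ∣ n) (c : ℕ) :
    ∑ m ∈ Finset.range n, (m + c) / k = ∑ m ∈ Finset.range n, m / k + c * (n / k) := by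
  induction c with
  | zero => simp
  | succ c ih =>
    have shift : ∑ m ∈ Finset.range n, (m + (c + 1)) / k + c / k =
        ∑ m ∈ Finset.range n, (m + c) / k + (n + c) / k := by
      simpa only [zero_add, add_assoc, add_comm 1 c] using
        (Finset.sum_range_succ' (fun m ↦ (m + c) / k) n).symm.trans (Finset.sum_range_succ _ n)
    rw [Nat.add_div_of_dvd_right hdvd, ih] at shift
    rw [add_one_mul]
    omega

theorem add_div_eq_or_eq_add_one {k c : ℕ} (hk : 0 < k) (hc : c ≤ k) (m : ℕ) :
    (m + c) / k = m / k ∨ (m + c) / k = m / k + 1 := by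
  have lower : m / k ≤ (m + c) / k := Nat.div_le_div_right (Nat.le_add_right m c)
  have upper : (m + c) / k ≤ m / k + 1 := by
    rw [← Nat.add_div_right m hk]
    gcongr
  omega

theorem div_modEq_div {a b k m : ℕ} (h : a ≡ b [MOD m * k]) : a / k ≡ b / k [MOD m] := by
  unfold Nat.ModEq
  rw [← Nat.mod_mul_left_div_self, ← Nat.mod_mul_left_div_self, h]

section Circle

variable {n k : ℕ}

theorem edgeLen_comm (i j : Fin (2 * n)) : edgeLen n i j = edgeLen n j i := by
  rw [edgeLen, edgeLen, min_comm]

theorem edgeLen_eq_min_dist (i j : Fin (2 * n)) :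
    edgeLen n i j = min (Nat.dist i j) (2 * n - Nat.dist i j) + 1 := by
  wlog hij : (i : ℕ) ≤ j generalizing i j
  · rw [edgeLen_comm, Nat.dist_comm, this j i (by omega)]
  have forward : ((j : ℕ) + 2 * n - i) % (2 * n) = j - i := by
    rw [Nat.sub_add_comm hij, Nat.add_mod_right, Nat.mod_eq_of_lt (by omega)]
  rw [edgeLen, forward, Nat.dist_eq_sub_of_le hij]
  rcases hij.eq_or_lt with heq | hlt
  · simp [heq]
  · rw [Nat.mod_eq_of_lt (by omega : (i : ℕ) + 2 * n - j < 2 * n)]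
    omega

theorem edgeLen_eq_dist_of_modEq {i j : Fin (2 * n)} {x y : ℕ} (hi : i ≡ x [MOD 2 * n])
    (hj : j ≡ y [MOD 2 * n]) (hxy : Nat.dist x y ≤ n) : edgeLen n i j = Nat.dist x y + 1 := by
  wlog hle : x ≤ y generalizing i j x y
  · rw [edgeLen_comm, Nat.dist_comm, this hj hi (Nat.dist_comm x y ▸ hxy) (by omega)]
  obtain ⟨d, rfl⟩ := Nat.exists_eq_add_of_le hle
  have dist_eq : Nat.dist x (x + d) = d := by simp [Nat.dist]
  rw [dist_eq] at hxy ⊢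
  have hj_mod : (j : ℕ) = (i + d) % (2 * n) :=
    (Nat.mod_eq_of_lt j.isLt).symm.trans (hj.trans (hi.symm.add_right d))
  have cases_j : (j : ℕ) = i + d ∨ (j : ℕ) + 2 * n = i + d := by
    rcases lt_or_ge (i + d) (2 * n) with hlt | hge
    · rw [Nat.mod_eq_of_lt hlt] at hj_mod
      exact .inl hj_mod
    · rw [Nat.mod_eq_sub_mod hge, Nat.mod_eq_of_lt (by omega)] at hj_mod
      omega
  rw [edgeLen_eq_min_dist, Nat.dist]
  omega

theorem redPt_eq_of_modEq (hdvd : k ∣ n) {i : Fin (2 * n)} {x : ℕ} (hi : i ≡ x [MOD 2 * n]) :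
    redPt k i = decide (x / k % 2 = 0) := by
  have hmod : (i / k : ℕ) ≡ x / k [MOD 2] :=
    div_modEq_div (hi.of_dvd (Nat.mul_dvd_mul_left 2 hdvd))
  rw [redPt, hmod]

/-- The closed walk on the `2 * n` points obtained from a walk `w` on the line by reducing points
modulo `2 * n`. -/
def wrapTour (n : ℕ) (w : ℕ → ℕ) (i : Fin (2 * n)) : Fin (2 * n) :=
  ⟨w i % (2 * n), Nat.mod_lt _ i.pos⟩

variable {w : ℕ → ℕ}

theorem wrapTour_modEq (w : ℕ → ℕ) (i : Fin (2 * n)) : wrapTour n w i ≡ w i [MOD 2 * n] :=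
  Nat.mod_modEq _ _

theorem wrapTour_nextIdx_modEq (hw : ∀ i j, i ≡ j [MOD 2 * n] → w i ≡ w j [MOD 2 * n])
    (i : Fin (2 * n)) : wrapTour n w (nextIdx i) ≡ w (i + 1) [MOD 2 * n] :=
  (wrapTour_modEq w _).trans (hw _ _ (Nat.mod_modEq _ _))

theorem wrapTour_bijective (hw : ∀ i j, w i ≡ w j [MOD 2 * n] → i ≡ j [MOD 2 * n]) :
    Function.Bijective (wrapTour n w) := by
  refine Finite.injective_iff_bijective.mp fun i j hij ↦ Fin.ext ?_
  exact (hw i j (congrArg Fin.val hij)).eq_of_lt_of_lt i.isLt j.isLt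

theorem isBichromaticTour_wrapTour (hdvd : k ∣ n)
    (hw : ∀ i j, w i ≡ w j [MOD 2 * n] ↔ i ≡ j [MOD 2 * n])
    (hcolor : ∀ i, w i / k ≡ i [MOD 2]) : IsBichromaticTour n k (wrapTour n w) := by
  refine ⟨wrapTour_bijective fun i j ↦ (hw i j).mp, fun i ↦ ?_⟩
  rw [redPt_eq_of_modEq hdvd (wrapTour_modEq w i),
    redPt_eq_of_modEq hdvd (wrapTour_nextIdx_modEq (fun i j ↦ (hw i j).mpr) i),
    hcolor, hcolor, ne_eq, decide_eq_decide]
  omega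

theorem tourLength_wrapTour (hw : ∀ i j, i ≡ j [MOD 2 * n] → w i ≡ w j [MOD 2 * n])
    (hdist : ∀ i, Nat.dist (w i) (w (i + 1)) ≤ n) :
    tourLength n (wrapTour n w) =
      ∑ i ∈ Finset.range (2 * n), (Nat.dist (w i) (w (i + 1)) + 1) := by
  rw [tourLength, ← Fin.sum_univ_eq_sum_range fun i ↦ Nat.dist (w i) (w (i + 1)) + 1]
  exact Fintype.sum_congr _ _ fun i ↦ edgeLen_eq_dist_of_modEq (wrapTour_modEq w i)
    (wrapTour_nextIdx_modEq hw i) (hdist i)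

end Circle

section NthRed

variable {n k : ℕ}

/-- The position of the `m`-th red point on the line whose points form alternately colored chunks
of `k`, starting with a red chunk; both kinds of index start at `0`. The `m`-th blue point is
`nthRed k m + k`. -/
def nthRed (k m : ℕ) : ℕ := m + k * (m / k)

theorem nthRed_strictMono (k : ℕ) : StrictMono (nthRed k) :=
  strictMono_id.add_monotone fun _ _ hab ↦ Nat.mul_le_mul_left k (Nat.div_le_div_right hab)

theorem nthRed_div (hk : 0 < k) (m : ℕ) : nthRed k m / k = 2 * (m / k) := by
  rw [nthRed, Nat.add_mul_div_left _ _ hk, two_mul]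

theorem nthRed_mod (hdvd : k ∣ n) (m : ℕ) : nthRed k m % (2 * n) = nthRed k (m % n) := by
  rcases n.eq_zero_or_pos with rfl | hn
  · simp
  have period : nthRed k m = nthRed k (m % n) + 2 * n * (m / n) := by
    obtain ⟨q, rfl⟩ := hdvd
    have hdiv : m / k = m % (k * q) / k + q * (m / (k * q)) := by
      conv_lhs => rw [← Nat.mod_add_div m (k * q), mul_assoc]
      exact Nat.add_mul_div_left _ _ (Nat.pos_of_mul_pos_right hn)
    rw [nthRed, nthRed, hdiv]
    linear_combination -(Nat.mod_add_div m (k * q))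
  have small : nthRed k (m % n) < 2 * n := by
    have := Nat.mul_div_le (m % n) k
    have := Nat.mod_lt m hn
    unfold nthRed
    omega
  rw [period, Nat.add_mul_mod_self_left, Nat.mod_eq_of_lt small]

theorem nthRed_modEq_iff (hdvd : k ∣ n) {a b : ℕ} :
    nthRed k a ≡ nthRed k b [MOD 2 * n] ↔ a ≡ b [MOD n] := by
  rw [Nat.ModEq, nthRed_mod hdvd, nthRed_mod hdvd, (nthRed_strictMono k).injective.eq_iff,
    Nat.ModEq]

end NthRed

section Zigzag

variable {n k h : ℕ}

/-- The walk on the line that alternates between red and blue points, visiting the red points in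
order from the `c`-th one on and the blue points in order from the `0`-th one on. -/
def zigzag (k c i : ℕ) : ℕ :=
  if Even i then nthRed k (i / 2 + c) else nthRed k (i / 2) + k

theorem zigzag_two_mul (k c m : ℕ) : zigzag k c (2 * m) = nthRed k (m + c) := by
  simp [zigzag]

theorem zigzag_two_mul_add_one (k c m : ℕ) : zigzag k c (2 * m + 1) = nthRed k m + k := by
  simp [zigzag, Nat.mul_add_div]

theorem zigzag_div_modEq (hk : 0 < k) (c i : ℕ) : zigzag k c i / k ≡ i [MOD 2] := by
  obtain ⟨m, rfl | rfl⟩ := i.even_or_odd'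
  · rw [zigzag_two_mul, nthRed_div hk, Nat.ModEq, Nat.mul_mod_right, Nat.mul_mod_right]
  · rw [zigzag_two_mul_add_one, Nat.add_div_right _ hk, nthRed_div hk, Nat.ModEq,
      Nat.mul_add_mod, Nat.mul_add_mod]

theorem zigzag_modEq_iff (hk : 0 < k) (hdvd : k ∣ n) (c i j : ℕ) :
    zigzag k c i ≡ zigzag k c j [MOD 2 * n] ↔ i ≡ j [MOD 2 * n] := by
  by_cases parity : i ≡ j [MOD 2]
  · obtain ⟨a, rfl | rfl⟩ := i.even_or_odd' <;> obtain ⟨b, rfl | rfl⟩ := j.even_or_odd'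
    · rw [zigzag_two_mul, zigzag_two_mul, nthRed_modEq_iff hdvd, Nat.ModEq.add_iff_right .rfl,
        Nat.ModEq.mul_left_cancel_iff' two_ne_zero]
    · simp [Nat.ModEq] at parity
    · simp [Nat.ModEq] at parity
    · rw [zigzag_two_mul_add_one, zigzag_two_mul_add_one, Nat.ModEq.add_iff_right .rfl,
        nthRed_modEq_iff hdvd, Nat.ModEq.add_iff_right .rfl,
        Nat.ModEq.mul_left_cancel_iff' two_ne_zero]
  · have color_ne : ¬ zigzag k c i ≡ zigzag k c j [MOD 2 * n] := fun hmod ↦ parity <|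
      (zigzag_div_modEq hk c i).symm.trans <|
        (div_modEq_div (hmod.of_dvd (Nat.mul_dvd_mul_left 2 hdvd))).trans (zigzag_div_modEq hk c j)
    have index_ne : ¬ i ≡ j [MOD 2 * n] := fun hmod ↦ parity (hmod.of_mul_right n)
    exact iff_of_false color_ne index_ne

theorem dist_zigzag_red_blue (hh : 0 < h) (m : ℕ) :
    Nat.dist (zigzag (2 * h) h (2 * m)) (zigzag (2 * h) h (2 * m + 1)) = h := by
  rw [zigzag_two_mul, zigzag_two_mul_add_one, nthRed, nthRed, Nat.dist]
  rcases add_div_eq_or_eq_add_one (by omega : 0 < 2 * h) (by omega : h ≤ 2 * h) m with hq | hq <;>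
    rw [hq] <;> grind

-- Stated additively to avoid subtracting `2 * (m / (2 * h))` on the right.
theorem dist_zigzag_blue_red (hh : 0 < h) (m : ℕ) :
    Nat.dist (zigzag (2 * h) h (2 * m + 1)) (zigzag (2 * h) h (2 * m + 2)) + 1 +
      2 * (m / (2 * h)) = h + 2 * ((m + (h + 1)) / (2 * h)) := by
  rw [← mul_add_one, zigzag_two_mul, zigzag_two_mul_add_one, add_right_comm m 1 h, add_assoc m h 1,
    nthRed, nthRed, Nat.dist]
  rcases add_div_eq_or_eq_add_one (by omega : 0 < 2 * h) (by omega : h + 1 ≤ 2 * h) m with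
    hq | hq <;> rw [hq] <;> grind

theorem dist_zigzag_succ_le (hh : 0 < h) (i : ℕ) :
    Nat.dist (zigzag (2 * h) h i) (zigzag (2 * h) h (i + 1)) ≤ h + 1 := by
  obtain ⟨m, rfl | rfl⟩ := i.even_or_odd'
  · rw [dist_zigzag_red_blue hh]
    exact Nat.le_succ h
  · change Nat.dist _ (zigzag (2 * h) h (2 * m + 2)) ≤ h + 1
    have := dist_zigzag_blue_red hh m
    have := add_div_eq_or_eq_add_one (by omega : 0 < 2 * h) (by omega : h + 1 ≤ 2 * h) m
    omega

theorem sum_dist_zigzag_blue_red (hh : 0 < h) (hdvd : 2 * h ∣ n) :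
    ∑ m ∈ Finset.range n,
        (Nat.dist (zigzag (2 * h) h (2 * m + 1)) (zigzag (2 * h) h (2 * m + 2)) + 1) =
      n * h + 2 * ((h + 1) * (n / (2 * h))) := by
  have total := Finset.sum_congr (rfl : Finset.range n = _) fun m _ ↦ dist_zigzag_blue_red hh m
  rw [Finset.sum_add_distrib, Finset.sum_add_distrib (f := fun _ ↦ h), ← Finset.mul_sum,
    ← Finset.mul_sum, sum_range_add_div hdvd, Finset.sum_const, Finset.card_range,
    smul_eq_mul] at total
  omega

theorem sum_dist_zigzag (hh : 0 < h) (hdvd : 2 * h ∣ n) :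
    ∑ i ∈ Finset.range (2 * n), (Nat.dist (zigzag (2 * h) h i) (zigzag (2 * h) h (i + 1)) + 1) =
      n * (2 * h) + 2 * n + 2 * n / (2 * h) := by
  simp only [sum_range_two_mul, dist_zigzag_red_blue hh]
  rw [Finset.sum_add_distrib, sum_dist_zigzag_blue_red hh hdvd, Finset.sum_const,
    Finset.card_range, smul_eq_mul, Nat.mul_div_assoc 2 hdvd]
  linear_combination Nat.mul_div_cancel' hdvd

end Zigzag

/-- For even chunk size `k` dividing `n`, there is a bichromatic travelling
salesman tour of the `2n` chunked equidistant points on the circle of total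
length exactly `n·k + 2n + 2n/k`. -/
theorem tsp_chunked_circle_even_upper
    (n k : ℕ) (hn : 1 ≤ n) (hk : 1 ≤ k) (hdvd : k ∣ n) (hke : Even k) :
    ∃ v : Fin (2 * n) → Fin (2 * n), IsBichromaticTour n k v ∧
      tourLength n v = n * k + 2 * n + 2 * n / k := by
  obtain ⟨h, rfl⟩ := hke.two_dvd
  have hh : 0 < h := Nat.pos_of_mul_pos_left hk
  have hzigzag := zigzag_modEq_iff hk hdvd h
  have hdist : ∀ i, Nat.dist (zigzag (2 * h) h i) (zigzag (2 * h) h (i + 1)) ≤ n := fun i ↦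
    calc
      _ ≤ h + 1 := dist_zigzag_succ_le hh i
      _ ≤ 2 * h := by omega
      _ ≤ n := Nat.le_of_dvd hn hdvd
  refine ⟨wrapTour n (zigzag (2 * h) h), ?_, ?_⟩
  · exact isBichromaticTour_wrapTour hdvd hzigzag (zigzag_div_modEq hk h)
  · rw [tourLength_wrapTour (fun i j ↦ (hzigzag i j).mpr) hdist, sum_dist_zigzag hh hdvd]
end
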